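/- Let X be a finite-dimensional real Banach space such that for every bounded linear operator T on X, the norm attainment set M_T can be written as D_T ∪ (−D_T) for some connected subset D_T of the unit sphere. Then X is a Euclidean space (the norm is induced by an inner product). -/

import Mathlib

/-!
It suffices to show that every plane in `X`, the range of an injective `B : ℂ → X`, is Euclidean.
Let `S : ℂ ≃ F` parametrize a two-dimensional quotient `F` of `X`. The hypothesis on `M_T` passes to
operators `F → X`, and says that the directions in which such an operator attains its norm form an
arc of the circle of directions.

Suppose that `z ↦ ‖B (z + p * conj z)‖` is not proportional to `z ↦ ‖S z‖` for any `p : ℂ`. Then the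
norming arc of each `B ∘ (z ↦ z + p * conj z) ∘ S⁻¹` is proper. Collapsing it to a point gives a
continuous map from the contractible parameter plane to a circle. When `p` runs once around the unit
circle, these operators are singular and their kernel makes a half turn, so the norming direction,
being different from the kernel, makes a half turn too. This is a loop of degree one in the circle
of directions: contradiction.

Hence the norms `‖B ·‖` and `‖S ·‖` are similar, and we may assume them proportional and `B` in John
position. Applying the same result to `B ∘ (a * ·)` with `|a| = 1` shows that
`z ↦ r * a * (z + p * conj z)` is an isometry of `‖B ·‖` for some `p` and some `r > 0`. In John
position linear isometries are orthogonal, so `p = 0` and `r = 1`: the norm `‖B ·‖` is rotation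
invariant.
-/

open Set Function Complex Topology ComplexConjugate
open scoped Real

section Topology

theorem continuous_of_eq_on_isClosed_fibers {P K Y : Type*} [TopologicalSpace P]
    [TopologicalSpace K] [CompactSpace K] [TopologicalSpace Y] {Z : Set (P × K)} {f : P × K → Y}
    {g : P → Y} (hZ : IsClosed Z) (hf : Continuous f) (hne : ∀ p, ∃ t, (p, t) ∈ Z)
    (hfg : ∀ q ∈ Z, f q = g q.1) : Continuous g := by
  have hquot : IsQuotientMap fun q : Z ↦ q.1.1 :=
    (isClosedMap_fst_of_compactSpace.comp hZ.isClosedMap_subtype_val).isQuotientMap (by fun_prop)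
      fun p ↦ (hne p).elim fun t ht ↦ ⟨⟨(p, t), ht⟩, rfl⟩
  rw [hquot.continuous_iff]
  exact (hf.comp continuous_subtype_val).congr fun q ↦ hfg q q.2

theorem eq_of_coe_addCircle_eq_comp {P : Type*} [TopologicalSpace P] [SimplyConnectedSpace P]
    [LocallyPathConnectedSpace P] {β : P → UnitAddCircle} (hβ : Continuous β) {γ : ℝ → P}
    (hγ : Continuous γ) {G : ℝ → ℝ} (hG : Continuous G) (hGβ : ∀ φ, (G φ : UnitAddCircle) = β (γ φ))
    {a b : ℝ} (hab : γ a = γ b) : G a = G b := by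
  have hcov := AddCircle.isCoveringMap_coe (1 : ℝ)
  obtain ⟨F, ⟨hFa, hF⟩, -⟩ := hcov.existsUnique_continuousMap_lifts ⟨β, hβ⟩ (γ a) (G a) (hGβ a)
  have hGF : G = F ∘ γ := hcov.eq_of_comp_eq hG (by fun_prop)
    (funext fun φ ↦ (hGβ φ).trans (congrFun hF (γ φ)).symm) a hFa.symm
  rw [hGF, comp_apply, comp_apply, hab]

/-- The cumulative distribution function of a `T`-periodic density `w`, normalized to increase by
`1` over each period. It collapses every interval on which `w` vanishes to a point. -/
noncomputable def periodicCDF (w : ℝ → ℝ) (T θ : ℝ) : ℝ :=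
  (∫ s in (0)..θ, w s) / ∫ s in (0)..T, w s

variable {w : ℝ → ℝ} {T : ℝ}

theorem integral_period_pos (hT : 0 < T) (hw : Continuous w) (hnonneg : ∀ s, 0 ≤ w s)
    (hper : Periodic w T) {c : ℝ} (hc : w c ≠ 0) : 0 < ∫ s in (0)..T, w s := by
  obtain ⟨d, hd, hcd⟩ := hper.exists_mem_Ico₀ hT c
  exact intervalIntegral.integral_pos hT hw.continuousOn (fun s _ ↦ hnonneg s)
    ⟨d, Ico_subset_Icc_self hd, (hnonneg d).lt_of_ne (hcd ▸ hc).symm⟩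

theorem periodicCDF_add_period (hw : Continuous w) (hper : Periodic w T)
    (hmass : ∫ s in (0)..T, w s ≠ 0) (θ : ℝ) :
    periodicCDF w T (θ + T) = periodicCDF w T θ + 1 := by
  rw [periodicCDF, periodicCDF, hper.intervalIntegral_add_eq_add 0 θ hw.intervalIntegrable,
    zero_add, add_div, div_self hmass]

theorem coe_periodicCDF_periodic (hw : Continuous w) (hper : Periodic w T)
    (hmass : ∫ s in (0)..T, w s ≠ 0) :
    Periodic (fun θ ↦ (periodicCDF w T θ : UnitAddCircle)) T := fun θ ↦ by
  simp only [periodicCDF_add_period hw hper hmass, AddCircle.coe_add_period]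

theorem periodicCDF_eq_of_ordConnected (hw : Continuous w) {s : Set ℝ}
    (hs : (s ∩ w ⁻¹' {0}).OrdConnected) {a b : ℝ} (ha : a ∈ s) (hb : b ∈ s) (hwa : w a = 0)
    (hwb : w b = 0) : periodicCDF w T a = periodicCDF w T b := by
  have hzero : ∫ t in a..b, w t = 0 := by
    refine (intervalIntegral.integral_congr fun t ht ↦ ?_).trans intervalIntegral.integral_zero
    exact (hs.uIcc_subset ⟨ha, hwa⟩ ⟨hb, hwb⟩ ht).2
  rw [periodicCDF, periodicCDF, ← intervalIntegral.integral_add_adjacent_intervals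
    (hw.intervalIntegrable 0 a) (hw.intervalIntegrable a b), hzero, add_zero]

theorem exists_add_zsmul_mem_Ioo_of_periodic {c θ : ℝ} (hT : 0 < T) (hper : Periodic w T)
    (hc : w c ≠ 0) (hθ : w θ = 0) : ∃ k : ℤ, θ + k • T ∈ Ioo c (c + T) := by
  obtain ⟨k, hk, -⟩ := existsUnique_add_zsmul_mem_Ico hT θ c
  refine ⟨k, hk.1.lt_of_ne fun h ↦ hc ?_, hk.2⟩
  rw [h, hper.zsmul k θ, hθ]

theorem coe_periodicCDF_eq (hT : 0 < T) (hw : Continuous w) (hper : Periodic w T)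
    (hmass : ∫ s in (0)..T, w s ≠ 0) {c : ℝ} (hc : w c ≠ 0)
    (hzeros : (Ioo c (c + T) ∩ w ⁻¹' {0}).OrdConnected) {a b : ℝ} (ha : w a = 0) (hb : w b = 0) :
    (periodicCDF w T a : UnitAddCircle) = periodicCDF w T b := by
  obtain ⟨k, hk⟩ := exists_add_zsmul_mem_Ioo_of_periodic hT hper hc ha
  obtain ⟨l, hl⟩ := exists_add_zsmul_mem_Ioo_of_periodic hT hper hc hb
  have hcdf := coe_periodicCDF_periodic hw hper hmass
  refine (hcdf.zsmul k a).symm.trans (Eq.trans ?_ (hcdf.zsmul l b))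
  exact congrArg _ (periodicCDF_eq_of_ordConnected hw hzeros hk hl
    (by rw [hper.zsmul, ha]) (by rw [hper.zsmul, hb]))

theorem continuous_periodicCDF {P : Type*} [TopologicalSpace P] {w : P → ℝ → ℝ}
    (hw : Continuous (uncurry w)) (hmass : ∀ p, ∫ s in (0)..T, w p s ≠ 0) :
    Continuous fun q : P × ℝ ↦ periodicCDF (w q.1) T q.2 :=
  (intervalIntegral.continuous_parametric_primitive_of_continuous hw).div
    ((intervalIntegral.continuous_parametric_intervalIntegral_of_continuous' hw 0 T).comp
      continuous_fst) fun q ↦ hmass q.1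

section Family

variable {P : Type*} [TopologicalSpace P] {w : P → ℝ → ℝ}

theorem continuous_coe_periodicCDF_zero (hT : 0 < T) (hw : Continuous (uncurry w))
    (hper : ∀ p, Periodic (w p) T) (hmass : ∀ p, ∫ s in (0)..T, w p s ≠ 0)
    (hne : ∀ p, ∃ c, w p c ≠ 0)
    (hzeros : ∀ p c, w p c ≠ 0 → (Ioo c (c + T) ∩ w p ⁻¹' {0}).OrdConnected)
    {θ : P → ℝ} (hθ : ∀ p, w p (θ p) = 0) :
    Continuous fun p ↦ (periodicCDF (w p) T (θ p) : UnitAddCircle) := by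
  refine continuous_of_eq_on_isClosed_fibers (K := Icc 0 T)
    (Z := {q | w q.1 q.2 = 0}) (f := fun q ↦ (periodicCDF (w q.1) T q.2 : UnitAddCircle))
    (isClosed_eq (hw.comp (f := fun q : P × Icc 0 T ↦ (q.1, (q.2 : ℝ))) (by fun_prop))
      continuous_const)
    ((AddCircle.continuous_mk' 1).comp ((continuous_periodicCDF hw hmass).comp
      (f := fun q : P × Icc 0 T ↦ (q.1, (q.2 : ℝ))) (by fun_prop)))
    (fun p ↦ ?_) (fun q hq ↦ ?_)
  · obtain ⟨t, ht, hθt⟩ := (hper p).exists_mem_Ico₀ hT (θ p)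
    exact ⟨⟨t, Ico_subset_Icc_self ht⟩, hθt.symm.trans (hθ p)⟩
  · obtain ⟨c, hc⟩ := hne q.1
    exact coe_periodicCDF_eq hT (hw.uncurry_left q.1) (hper q.1) (hmass q.1) hc (hzeros q.1 c hc)
      hq (hθ q.1)

theorem continuous_periodicCDF_zero (hw : Continuous (uncurry w))
    (hper : ∀ p, Periodic (w p) T) (hmass : ∀ p, ∫ s in (0)..T, w p s ≠ 0) {m : P → ℝ}
    (hm : Continuous m) (hne : ∀ p, w p (m p) ≠ 0)
    (hzeros : ∀ p, (Ioo (m p) (m p + T) ∩ w p ⁻¹' {0}).OrdConnected)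
    {θ : P → ℝ} (hθm : ∀ p, θ p ∈ Ioo (m p) (m p + T)) (hθ : ∀ p, w p (θ p) = 0) :
    Continuous fun p ↦ periodicCDF (w p) T (θ p) := by
  have hmaps : Continuous fun q : P × Icc 0 T ↦ (q.1, m q.1 + q.2) := by fun_prop
  refine continuous_of_eq_on_isClosed_fibers (K := Icc 0 T) (Z := {q | w q.1 (m q.1 + q.2) = 0})
    (isClosed_eq (hw.comp hmaps) continuous_const)
    ((continuous_periodicCDF hw hmass).comp hmaps) (fun p ↦ ?_) (fun q hq ↦ ?_)
  · exact ⟨⟨θ p - m p, by linarith [(hθm p).1], by linarith [(hθm p).2]⟩, by simp [hθ p]⟩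
  · have hmem : m q.1 + q.2 ∈ Ioo (m q.1) (m q.1 + T) := by
      refine ⟨lt_add_of_pos_right _ (q.2.2.1.lt_of_ne fun h ↦ hne q.1 ?_),
        add_lt_add_right (q.2.2.2.lt_of_ne fun h ↦ hne q.1 ?_) _⟩
      · simpa [← h] using hq
      · simpa [h, hper q.1 (m q.1)] using hq
    exact periodicCDF_eq_of_ordConnected (hw.uncurry_left q.1) (hzeros q.1) hmem (hθm q.1) hq
      (hθ q.1)

end Family

theorem exists_forall_eq_zero_of_monodromy {P : Type*} [TopologicalSpace P] [SimplyConnectedSpace P]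
    [LocallyPathConnectedSpace P] {w : P → ℝ → ℝ} (hT : 0 < T) (hw : Continuous (uncurry w))
    (hnonneg : ∀ p s, 0 ≤ w p s) (hper : ∀ p, Periodic (w p) T) (hzero : ∀ p, ∃ s, w p s = 0)
    (hzeros : ∀ p c, w p c ≠ 0 → (Ioo c (c + T) ∩ w p ⁻¹' {0}).OrdConnected)
    {γ : ℝ → P} (hγ : Continuous γ) {m : ℝ → ℝ} (hm : Continuous m) {a b : ℝ} (hab : γ a = γ b)
    (hmab : m b = m a + T) (hne : ∀ φ, w (γ φ) (m φ) ≠ 0) : ∃ p, ∀ s, w p s = 0 := by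
  by_contra! hne'
  have hcont p : Continuous (w p) := hw.uncurry_left p
  have hmass p : ∫ s in (0)..T, w p s ≠ 0 := by
    obtain ⟨c, hc⟩ := hne' p
    exact (integral_period_pos hT (hcont p) (hnonneg p) (hper p) hc).ne'
  choose θ hθ using hzero
  choose k hk using fun φ ↦ exists_add_zsmul_mem_Ioo_of_periodic hT (hper (γ φ)) (hne φ) (hθ (γ φ))
  have hθk φ : w (γ φ) (θ (γ φ) + k φ • T) = 0 := ((hper _).zsmul _ _).trans (hθ _)
  have hwγ : Continuous (uncurry fun φ ↦ w (γ φ)) :=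
    hw.comp (f := fun q : ℝ × ℝ ↦ (γ q.1, q.2)) (by fun_prop)
  have hlift := eq_of_coe_addCircle_eq_comp
    (continuous_coe_periodicCDF_zero hT hw hper hmass hne' hzeros hθ) hγ
    (continuous_periodicCDF_zero hwγ (fun φ ↦ hper (γ φ)) (fun φ ↦ hmass (γ φ)) hm hne
      (fun φ ↦ hzeros _ _ (hne φ)) hk hθk)
    (fun φ ↦ (coe_periodicCDF_periodic (hcont _) (hper _) (hmass _)).zsmul (k φ) (θ (γ φ))) hab
  have hshift : periodicCDF (w (γ b)) T (θ (γ b) + k b • T) =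
      periodicCDF (w (γ b)) T (θ (γ a) + k a • T + T) := by
    refine periodicCDF_eq_of_ordConnected (hcont _) (hzeros _ _ (hne b)) (hk b) ?_ (hθk b) ?_
    · have := hk a
      rw [hmab]
      exact ⟨by linarith [this.1], by linarith [this.2]⟩
    · rw [← hab, hper, hθk]
  rw [hshift, ← hab, periodicCDF_add_period (hcont _) (hper _) (hmass _)] at hlift
  linarith

end Topology

section NormAttainment

open Pointwise

variable {F Y : Type*} [NormedAddCommGroup F] [NormedSpace ℝ F] [NormedAddCommGroup Y]
  [NormedSpace ℝ Y]

/-- The norm attainment set `M_T` of an operator `T`: the unit vectors at which `T` attains its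
operator norm. -/
def normAttainmentSet (T : F →L[ℝ] Y) : Set F :=
  {x | ‖x‖ = 1 ∧ ‖T x‖ = ‖T‖}

/-- A set is connected up to sign if it is of the form `D ∪ (-D)` with `D` connected; in
particular it is symmetric and nonempty. -/
def IsConnectedUpToSign {E : Type*} [TopologicalSpace E] [Neg E] (M : Set E) : Prop :=
  ∃ D : Set E, IsConnected D ∧ M = D ∪ -D

namespace IsConnectedUpToSign

theorem nonempty {E : Type*} [TopologicalSpace E] [Neg E] {M : Set E}
    (hM : IsConnectedUpToSign M) : M.Nonempty := by
  obtain ⟨D, hD, rfl⟩ := hM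
  exact hD.nonempty.inl

variable {E Z : Type*} [TopologicalSpace E] [InvolutiveNeg E] [TopologicalSpace Z] {M : Set E}

theorem isPreconnected_image_of_even (hM : IsConnectedUpToSign M) {f : E → Z} (hf : Continuous f)
    (heven : f.Even) : IsPreconnected (f '' M) := by
  obtain ⟨D, hD, rfl⟩ := hM
  have himage : f '' (D ∪ -D) = f '' D := by
    rw [image_union, ← image_neg_eq_neg, image_image, funext heven, union_self]
  exact himage ▸ hD.isPreconnected.image f hf.continuousOn

theorem image_of_odd [InvolutiveNeg Z] (hM : IsConnectedUpToSign M) {f : E → Z}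
    (hf : Continuous f) (hodd : f.Odd) : IsConnectedUpToSign (f '' M) := by
  obtain ⟨D, hD, rfl⟩ := hM
  refine ⟨f '' D, hD.image f hf.continuousOn, ?_⟩
  rw [image_union, ← image_neg_eq_neg, ← image_neg_eq_neg, image_image, image_image, funext hodd]

end IsConnectedUpToSign

/-- Measures how far `L` is from attaining its norm in the direction `S (exp (s * I))`, for a
parametrization `S` of a plane by `ℂ`. -/
noncomputable def attainmentGap (S : ℂ →L[ℝ] F) (L : F →L[ℝ] Y) (s : ℝ) : ℝ :=
  ‖L‖ * ‖S (exp (s * I))‖ - ‖L (S (exp (s * I)))‖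

theorem attainmentGap_nonneg (S : ℂ →L[ℝ] F) (L : F →L[ℝ] Y) (s : ℝ) : 0 ≤ attainmentGap S L s :=
  sub_nonneg.2 (L.le_opNorm _)

theorem attainmentGap_periodic (S : ℂ →L[ℝ] F) (L : F →L[ℝ] Y) :
    Periodic (attainmentGap S L) π := fun s ↦ by
  simp [attainmentGap, add_mul, exp_add, exp_pi_mul_I]

theorem continuous_attainmentGap {P : Type*} [TopologicalSpace P] (S : ℂ →L[ℝ] F)
    {L : P → F →L[ℝ] Y} (hL : Continuous L) :
    Continuous (uncurry fun p ↦ attainmentGap S (L p)) := by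
  simp only [uncurry_def, attainmentGap]
  fun_prop

theorem smul_mem_normAttainmentSet {L : F →L[ℝ] Y} {y : F} (hy : y ≠ 0)
    (hL : ‖L y‖ = ‖L‖ * ‖y‖) : ‖y‖⁻¹ • y ∈ normAttainmentSet L := by
  have hy' : ‖y‖ ≠ 0 := norm_ne_zero_iff.2 hy
  refine ⟨norm_smul_inv_norm hy, ?_⟩
  rw [map_smul, norm_smul, hL, norm_inv, norm_norm]
  field_simp

theorem eq_ofReal_mul_exp_of_im_eq_zero {z : ℂ} {s : ℝ} (hz : (exp (-(s * I)) * z).im = 0) :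
    ∃ r : ℝ, z = r * exp (s * I) := by
  refine ⟨(exp (-(s * I)) * z).re, ?_⟩
  rw [conj_eq_iff_re.1 (conj_eq_iff_im.2 hz), mul_right_comm, ← exp_add]
  simp

theorem attainmentGap_eq_zero {S : ℂ ≃L[ℝ] F} {L : F →L[ℝ] Y} {y : F}
    (hy : y ∈ normAttainmentSet L) {s : ℝ} (hs : (exp (-(s * I)) * S.symm y).im = 0) :
    attainmentGap S L s = 0 := by
  obtain ⟨r, hr⟩ := eq_ofReal_mul_exp_of_im_eq_zero hs
  have hyr : y = r • S (exp (s * I)) := by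
    rw [← map_smul, real_smul, ← hr, S.apply_symm_apply]
  obtain ⟨hnorm, hLy⟩ := hy
  rw [hyr, norm_smul] at hnorm
  rw [hyr, map_smul, norm_smul] at hLy
  have hr0 : ‖r‖ ≠ 0 := left_ne_zero_of_mul_eq_one hnorm
  refine sub_eq_zero.2 (mul_left_cancel₀ hr0 ?_)
  simp only [ContinuousLinearEquiv.coe_coe]
  rw [hLy, mul_left_comm, hnorm, mul_one]

theorem exists_attainmentGap_eq_zero (S : ℂ ≃L[ℝ] F) {L : F →L[ℝ] Y}
    (hL : (normAttainmentSet L).Nonempty) : ∃ s, attainmentGap S L s = 0 := by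
  obtain ⟨y, hy⟩ := hL
  refine ⟨arg (S.symm y), attainmentGap_eq_zero hy ?_⟩
  nth_rewrite 2 [← norm_mul_exp_arg_mul_I (S.symm y)]
  rw [mul_left_comm, ← exp_add]
  simp

theorem im_exp_neg_mul_ofReal_mul_exp (r s c : ℝ) :
    (exp (-(c * I)) * (r * exp (s * I))).im = r * Real.sin (s - c) := by
  rw [mul_left_comm, ← exp_add, im_ofReal_mul, ← exp_ofReal_mul_I_im]
  push_cast
  ring_nf

theorem ordConnected_attainmentGap_eq_zero {S : ℂ ≃L[ℝ] F} {L : F →L[ℝ] Y}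
    (hL : IsConnectedUpToSign (normAttainmentSet L)) {c : ℝ} (hc : attainmentGap S L c ≠ 0) :
    (Ioo c (c + π) ∩ attainmentGap S L ⁻¹' {0}).OrdConnected := by
  refine ⟨fun a ⟨ha, hga⟩ b ⟨hb, hgb⟩ t ht ↦
    ⟨⟨ha.1.trans_le ht.1, ht.2.trans_lt hb.2⟩, by_contra fun hgt ↦ ?_⟩⟩
  have hat : a < t := ht.1.lt_of_ne fun h ↦ hgt (h ▸ hga)
  have htb : t < b := ht.2.lt_of_ne fun h ↦ hgt (h ▸ hgb)
  -- `κ` vanishes only in the directions `c` and `t`, which separate the directions `a` and `b`.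
  let κ (y : F) : ℝ := (exp (-(c * I)) * S.symm y).im * (exp (-(t * I)) * S.symm y).im
  have hκ (r s : ℝ) : κ (r • S (exp (s * I))) = r ^ 2 * (Real.sin (s - c) * Real.sin (s - t)) := by
    simp only [κ, map_smul, S.symm_apply_apply, real_smul, im_exp_neg_mul_ofReal_mul_exp]
    ring
  have hmem (s : ℝ) (hs : attainmentGap S L s = 0) :
      ‖S (exp (s * I))‖⁻¹ • S (exp (s * I)) ∈ normAttainmentSet L :=
    smul_mem_normAttainmentSet (S.map_ne_zero_iff.2 (exp_ne_zero _)) (sub_eq_zero.1 hs).symm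
  have hconn : IsPreconnected (κ '' normAttainmentSet L) :=
    hL.isPreconnected_image_of_even (by fun_prop) fun y ↦ by
      simp only [κ, map_neg, mul_neg, neg_im, neg_mul, neg_neg]
  obtain ⟨y, hy, hκy⟩ : 0 ∈ κ '' normAttainmentSet L := by
    refine hconn.Icc_subset (mem_image_of_mem κ (hmem a hga)) (mem_image_of_mem κ (hmem b hgb))
      ⟨?_, ?_⟩
    · rw [hκ]
      exact mul_nonpos_of_nonneg_of_nonpos (sq_nonneg _) (mul_nonpos_of_nonneg_of_nonpos
        (Real.sin_nonneg_of_nonneg_of_le_pi (by linarith [ha.1]) (by linarith [ha.2]))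
        (Real.sin_nonpos_of_nonpos_of_neg_pi_le (by linarith) (by linarith [ha.1, hb.2])))
    · rw [hκ]
      exact mul_nonneg (sq_nonneg _) (mul_nonneg
        (Real.sin_nonneg_of_nonneg_of_le_pi (by linarith [hb.1]) (by linarith [hb.2]))
        (Real.sin_nonneg_of_nonneg_of_le_pi (by linarith) (by linarith [ha.1, hb.2])))
  rcases mul_eq_zero.1 hκy with h | h
  · exact hc (attainmentGap_eq_zero hy h)
  · exact hgt (attainmentGap_eq_zero hy h)

end NormAttainment

section Plane

variable {F Y : Type*} [NormedAddCommGroup F] [NormedSpace ℝ F] [NormedAddCommGroup Y]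
  [NormedSpace ℝ Y]

/-- The real-linear map `z ↦ u * z + v * conj z` of the plane; every real-linear endomorphism of
`ℂ` is of this form. -/
noncomputable def mulAddMulConj (u v : ℂ) : ℂ →L[ℝ] ℂ :=
  u • (1 : ℂ →L[ℝ] ℂ) + v • (conjCLE : ℂ →L[ℝ] ℂ)

theorem mulAddMulConj_apply (u v z : ℂ) : mulAddMulConj u v z = u * z + v * conj z := by
  simp [mulAddMulConj]

theorem mulAddMulConj_one_ne_zero (p : ℂ) : mulAddMulConj 1 p ≠ 0 := fun h ↦ by
  have h1 : 1 + p = 0 := by simpa [mulAddMulConj_apply] using DFunLike.congr_fun h 1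
  have hI : I - p * I = 0 := by
    simpa [mulAddMulConj_apply, sub_eq_add_neg] using DFunLike.congr_fun h I
  have h2I : 2 * I = 0 := by linear_combination I * h1 + hI
  simp at h2I

theorem mulAddMulConj_one_exp_apply (φ : ℝ) :
    mulAddMulConj 1 (exp (φ * I)) (exp ((φ / 2 + π / 2 : ℝ) * I)) = 0 := by
  have hexp : φ * I + conj ((φ / 2 + π / 2 : ℝ) * I) = (φ / 2 + π / 2 : ℝ) * I - π * I := by
    rw [map_mul, conj_ofReal, conj_I]
    push_cast
    ring
  rw [mulAddMulConj_apply, ← exp_conj, ← exp_add, hexp, exp_sub_pi_mul_I]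
  ring

theorem det_mulAddMulConj (u v : ℂ) : (mulAddMulConj u v).det = ‖u‖ ^ 2 - ‖v‖ ^ 2 := by
  rw [ContinuousLinearMap.det, ← LinearMap.det_toMatrix basisOneI, Matrix.det_fin_two]
  simp [LinearMap.toMatrix_apply, mulAddMulConj_apply, ← normSq_eq_norm_sq, normSq_apply]
  ring

variable {E : Type*} [NormedAddCommGroup E] [NormedSpace ℝ E]

/-- An operator `B` is in John position if the unit ball of its domain has maximal volume among its
linear images contained in the unit ball `{x | ‖B x‖ ≤ 1}` of the pulled back norm. The volume of
the image under `T` is measured by `|T.det|`. -/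
structure InJohnPosition (B : E →L[ℝ] F) : Prop where
  norm_le_one : ‖B‖ ≤ 1
  abs_det_le_one : ∀ T : E →L[ℝ] E, ‖B ∘L T‖ ≤ 1 → |T.det| ≤ 1

theorem isCompact_setOf_norm_comp_le_one [FiniteDimensional ℝ E] {B : E →L[ℝ] F}
    (hB : Injective B) : IsCompact {T : E →L[ℝ] E | ‖B ∘L T‖ ≤ 1} := by
  obtain ⟨K, -, hK⟩ := B.toLinearMap.exists_antilipschitzWith (LinearMap.ker_eq_bot.2 hB)
  have : ProperSpace (E →L[ℝ] E) := FiniteDimensional.proper ℝ _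
  refine Metric.isCompact_of_isClosed_isBounded
    (isClosed_le (by fun_prop) continuous_const) (isBounded_iff_forall_norm_le.2 ⟨K, ?_⟩)
  refine fun T hT ↦ T.opNorm_le_bound K.2 fun x ↦ ?_
  have hBT : ‖B (T x)‖ ≤ ‖x‖ := ((B ∘L T).le_of_opNorm_le hT x).trans_eq (one_mul _)
  calc ‖T x‖ ≤ K * ‖B (T x)‖ := hK.le_mul_norm (map_zero _) (T x)
    _ ≤ K * ‖x‖ := by gcongr

theorem exists_inJohnPosition_comp [FiniteDimensional ℝ E] {B : E →L[ℝ] F} (hB : Injective B) :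
    ∃ U : E ≃L[ℝ] E, InJohnPosition (B ∘L (U : E →L[ℝ] E)) := by
  obtain ⟨U, hU, hmax⟩ := (isCompact_setOf_norm_comp_le_one hB).exists_isMaxOn ⟨0, by simp⟩
    (f := fun T ↦ |T.det|) ContinuousLinearMap.continuous_det.abs.continuousOn
  have hdet : 0 < |U.det| := by
    have hscalar : ‖B ∘L ((‖B‖ + 1)⁻¹ • (1 : E →L[ℝ] E))‖ ≤ 1 := by
      rw [ContinuousLinearMap.comp_smul, norm_smul, norm_inv, Real.norm_of_nonneg (by positivity)]
      exact inv_mul_le_one_of_le₀ (le_add_of_nonneg_right zero_le_one) (by positivity)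
    refine lt_of_lt_of_le (abs_pos.2 ?_) (hmax hscalar)
    rw [ContinuousLinearMap.det, ContinuousLinearMap.toLinearMap_smul, LinearMap.det_smul,
      ContinuousLinearMap.toLinearMap_one, map_one, mul_one]
    positivity
  refine ⟨U.toContinuousLinearEquivOfDetNeZero (abs_pos.1 hdet), ?_, fun T hT ↦ ?_⟩
  · rwa [ContinuousLinearMap.coe_toContinuousLinearEquivOfDetNeZero]
  · have hUT : |(U ∘L T).det| ≤ |U.det| := hmax hT
    rw [ContinuousLinearMap.det, ContinuousLinearMap.toLinearMap_comp, LinearMap.det_comp,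
      abs_mul] at hUT
    exact le_of_mul_le_mul_left (by rwa [mul_one]) hdet

namespace InJohnPosition

theorem abs_det_eq_one [FiniteDimensional ℝ E] {B : E →L[ℝ] F} (hB : InJohnPosition B)
    (hinj : Injective B) {T : E →L[ℝ] E} (hT : ∀ x, ‖B (T x)‖ = ‖B x‖) : |T.det| = 1 := by
  have hle {R : E →L[ℝ] E} (hR : ∀ x, ‖B (R x)‖ = ‖B x‖) : |R.det| ≤ 1 :=
    hB.abs_det_le_one R <| ((B ∘L R).opNorm_le_bound (norm_nonneg B) fun x ↦
      (hR x).trans_le (B.le_opNorm x)).trans hB.norm_le_one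
  have hker : LinearMap.ker T.toLinearMap = ⊥ := LinearMap.ker_eq_bot'.2 fun x hx ↦
    hinj <| by rw [map_zero, ← norm_eq_zero, ← hT, show T x = 0 from hx, map_zero, norm_zero]
  let R : E ≃L[ℝ] E := (LinearEquiv.ofInjectiveEndo T.toLinearMap
    (LinearMap.ker_eq_bot.1 hker)).toContinuousLinearEquiv
  have hRT : (R : E →L[ℝ] E) = T := rfl
  have hinv : |T.det|⁻¹ ≤ 1 := by
    rw [← hRT, ← abs_inv, ← R.det_coe_symm]
    exact hle fun x ↦ by simpa [← hRT] using (hT (R.symm x)).symm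
  exact (hle hT).antisymm ((inv_le_one₀ (abs_pos.2 (R.toLinearEquiv.isUnit_det'.ne_zero))).1 hinv)

theorem abs_norm_add_sq_sub_le {B : ℂ →L[ℝ] F} (hB : InJohnPosition B) {u v a b : ℂ}
    (huv : ∀ z, ‖B (mulAddMulConj u v z)‖ ≤ ‖z‖) (hab : ∀ z, ‖mulAddMulConj a b z‖ ≤ ‖z‖) :
    |‖u + a‖ ^ 2 - ‖v + b‖ ^ 2| ≤ 4 := by
  have hmid : |(mulAddMulConj ((u + a) / 2) ((v + b) / 2)).det| ≤ 1 := by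
    refine hB.abs_det_le_one _ (ContinuousLinearMap.opNorm_le_bound _ zero_le_one fun z ↦ ?_)
    have hsum : mulAddMulConj ((u + a) / 2) ((v + b) / 2) z =
        (2⁻¹ : ℝ) • (mulAddMulConj u v z + mulAddMulConj a b z) := by
      simp only [mulAddMulConj_apply, real_smul]
      push_cast
      ring
    have hBab : ‖B (mulAddMulConj a b z)‖ ≤ ‖z‖ :=
      (B.le_of_opNorm_le hB.norm_le_one _).trans ((one_mul _).trans_le (hab z))
    calc ‖B (mulAddMulConj ((u + a) / 2) ((v + b) / 2) z)‖
        = 2⁻¹ * ‖B (mulAddMulConj u v z) + B (mulAddMulConj a b z)‖ := by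
          rw [hsum, map_smul, map_add, norm_smul, Real.norm_of_nonneg (by positivity)]
      _ ≤ 2⁻¹ * (‖z‖ + ‖z‖) := by gcongr; exact norm_add_le_of_le (huv z) hBab
      _ = 1 * ‖z‖ := by ring
  rw [det_mulAddMulConj, norm_div, norm_div, div_pow, div_pow, ← sub_div, abs_div] at hmid
  norm_num at hmid
  linarith

-- Averaging the isometry with the rotation `z ↦ (u / ‖u‖) * z` or with the reflection
-- `z ↦ (v / ‖v‖) * conj z` would increase the determinant if both `u` and `v` were nonzero.
theorem norm_eq_one_and_eq_zero {B : ℂ →L[ℝ] F} (hB : InJohnPosition B)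
    (hinj : Injective B) {u v : ℂ} (hu : u ≠ 0)
    (hisom : ∀ z, ‖B (mulAddMulConj u v z)‖ = ‖B z‖) : ‖u‖ = 1 ∧ v = 0 := by
  have hle (z : ℂ) : ‖B (mulAddMulConj u v z)‖ ≤ ‖z‖ :=
    (hisom z).trans_le ((B.le_of_opNorm_le hB.norm_le_one z).trans_eq (one_mul _))
  have hdet : |‖u‖ ^ 2 - ‖v‖ ^ 2| = 1 :=
    det_mulAddMulConj u v ▸ hB.abs_det_eq_one hinj hisom
  have hadd {w : ℂ} (hw : w ≠ 0) : ‖w + w / ‖w‖‖ = ‖w‖ + 1 := by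
    have hw' : ‖w‖ ≠ 0 := norm_ne_zero_iff.2 hw
    rw [div_eq_inv_mul, ← ofReal_inv, ← real_smul, (SameRay.sameRay_nonneg_smul_right w
      (inv_nonneg.2 (norm_nonneg w))).norm_add, norm_smul, norm_inv, norm_norm, inv_mul_cancel₀ hw']
  have hrot : |(‖u‖ + 1) ^ 2 - ‖v‖ ^ 2| ≤ 4 := by
    simpa [hadd hu] using hB.abs_norm_add_sq_sub_le (a := u / ‖u‖) (b := 0) hle fun z ↦ by
      simp [mulAddMulConj_apply, hu]
  have hrefl (hv : v ≠ 0) : |‖u‖ ^ 2 - (‖v‖ + 1) ^ 2| ≤ 4 := by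
    simpa [hadd hv] using hB.abs_norm_add_sq_sub_le (a := 0) (b := v / ‖v‖) hle fun z ↦ by
      simp [mulAddMulConj_apply, hv]
  have hu' : 0 < ‖u‖ := norm_pos_iff.2 hu
  rcases (abs_eq zero_le_one).1 hdet with h | h
  · have hu1 : ‖u‖ ≤ 1 := by linarith [(abs_le.1 hrot).2]
    have hv : ‖v‖ = 0 := by nlinarith [norm_nonneg v]
    exact ⟨by nlinarith, norm_eq_zero.1 hv⟩
  · have hv : v ≠ 0 := by
      rintro rfl
      rw [norm_zero] at h
      nlinarith
    have hv1 : ‖v‖ ≤ 1 := by linarith [(abs_le.1 (hrefl hv)).1]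
    nlinarith [norm_nonneg v]

end InJohnPosition

theorem exists_norm_comp_mulAddMulConj_eq {S : ℂ ≃L[ℝ] F}
    (hF : ∀ L : F →L[ℝ] Y, L ≠ 0 → IsConnectedUpToSign (normAttainmentSet L)) {B : ℂ →L[ℝ] Y}
    (hB : Injective B) :
    ∃ p : ℂ, ∃ c > 0, ∀ z, ‖B (mulAddMulConj 1 p z)‖ = c * ‖S z‖ := by
  let L (p : ℂ) : F →L[ℝ] Y := B ∘L mulAddMulConj 1 p ∘L (S.symm : F →L[ℝ] ℂ)
  have hLS (p z : ℂ) : L p (S z) = B (mulAddMulConj 1 p z) := by simp [L]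
  have hL0 (p : ℂ) : L p ≠ 0 := fun h ↦ mulAddMulConj_one_ne_zero p <|
    ContinuousLinearMap.ext fun z ↦ hB <| by rw [← hLS, h]; simp
  have hLcont : Continuous L := by unfold L mulAddMulConj; fun_prop
  have hconn p : IsConnectedUpToSign (normAttainmentSet (L p)) := hF _ (hL0 p)
  obtain ⟨p, hp⟩ := exists_forall_eq_zero_of_monodromy (w := fun p ↦ attainmentGap S (L p))
    Real.pi_pos (continuous_attainmentGap _ hLcont) (fun p ↦ attainmentGap_nonneg _ _)
    (fun p ↦ attainmentGap_periodic _ _)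
    (fun p ↦ exists_attainmentGap_eq_zero S (hconn p).nonempty)
    (fun p c ↦ ordConnected_attainmentGap_eq_zero (hconn p))
    (γ := fun φ ↦ exp (φ * I)) (by fun_prop) (m := fun φ ↦ φ / 2 + π / 2) (by fun_prop)
    (a := 0) (b := 2 * π) (by simp) (by ring) fun φ ↦ by
      simp only [attainmentGap, ContinuousLinearEquiv.coe_coe, hLS, mulAddMulConj_one_exp_apply]
      simp [hL0]
  refine ⟨p, ‖L p‖, norm_pos_iff.2 (hL0 p), fun z ↦ ?_⟩
  rw [← hLS, ← norm_mul_exp_arg_mul_I z, ← real_smul, map_smul, map_smul, norm_smul, norm_smul,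
    mul_left_comm]
  exact congrArg _ (sub_eq_zero.1 (hp (arg z))).symm

end Plane

section PlaneTheorem

variable {F Y : Type*} [NormedAddCommGroup F] [NormedSpace ℝ F] [NormedAddCommGroup Y]
  [NormedSpace ℝ Y]

theorem norm_apply_eq_of_inJohnPosition {S : ℂ ≃L[ℝ] F}
    (hF : ∀ L : F →L[ℝ] Y, L ≠ 0 → IsConnectedUpToSign (normAttainmentSet L)) {B : ℂ →L[ℝ] Y}
    (hB : InJohnPosition B) {c : ℝ} (hc : 0 < c) (hBS : ∀ z, ‖B z‖ = c * ‖S z‖) (z : ℂ) :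
    ‖B z‖ = ‖z‖ * ‖B 1‖ := by
  have hinj : Injective B := (injective_iff_map_eq_zero B).2 fun z hz ↦ by
    simpa [hz, hc.ne'] using hBS z
  have hunit {a : ℂ} (ha : ‖a‖ = 1) : ‖B a‖ = ‖B 1‖ := by
    have ha0 : a ≠ 0 := norm_ne_zero_iff.1 (ha ▸ one_ne_zero)
    obtain ⟨p, d, hd, hpd⟩ := exists_norm_comp_mulAddMulConj_eq (S := S) hF
      (B := B ∘L mulAddMulConj a 0) fun z w hzw ↦ by
        simpa [mulAddMulConj_apply, ha0] using hinj hzw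
    have hisom (z : ℂ) :
        ‖B (mulAddMulConj ((c / d : ℝ) * a) ((c / d : ℝ) * (a * p)) z)‖ = ‖B z‖ := by
      have hsmul : mulAddMulConj ((c / d : ℝ) * a) ((c / d : ℝ) * (a * p)) z =
          (c / d) • mulAddMulConj a 0 (mulAddMulConj 1 p z) := by
        simp only [mulAddMulConj_apply, real_smul]
        ring
      calc ‖B (mulAddMulConj ((c / d : ℝ) * a) ((c / d : ℝ) * (a * p)) z)‖
          = c / d * (d * ‖S z‖) := by
            rw [hsmul, map_smul, norm_smul, Real.norm_of_nonneg (by positivity), ← hpd,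
              ContinuousLinearMap.comp_apply]
        _ = ‖B z‖ := by rw [hBS, ← mul_assoc, div_mul_cancel₀ c hd.ne']
    obtain ⟨hr, hp⟩ := hB.norm_eq_one_and_eq_zero hinj (by simp [ha0, hc.ne', hd.ne']) hisom
    have hcd : c / d = 1 := by
      rwa [norm_mul, ha, mul_one, norm_real, Real.norm_of_nonneg (by positivity)] at hr
    rw [hp, hcd] at hisom
    simpa [mulAddMulConj_apply] using hisom 1
  calc ‖B z‖ = ‖B (‖z‖ • exp (arg z * I))‖ := by rw [real_smul, norm_mul_exp_arg_mul_I]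
    _ = ‖z‖ * ‖B 1‖ := by
      rw [map_smul, norm_smul, norm_norm, hunit (norm_exp_ofReal_mul_I _)]

theorem exists_norm_comp_eq_norm_mul {S : ℂ ≃L[ℝ] F}
    (hF : ∀ L : F →L[ℝ] Y, L ≠ 0 → IsConnectedUpToSign (normAttainmentSet L)) {B : ℂ →L[ℝ] Y}
    (hB : Injective B) :
    ∃ V : ℂ →L[ℝ] ℂ, Surjective V ∧ ∃ k : ℝ, ∀ z, ‖B (V z)‖ = ‖z‖ * k := by
  obtain ⟨p, c, hc, hpc⟩ := exists_norm_comp_mulAddMulConj_eq (S := S) hF hB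
  have hinj : Injective (B ∘L mulAddMulConj 1 p) := (injective_iff_map_eq_zero _).2 fun z hz ↦ by
    have hSz : c * ‖S z‖ = 0 := by rw [← hpc, ← ContinuousLinearMap.comp_apply, hz, norm_zero]
    simpa [hc.ne'] using hSz
  obtain ⟨U, hU⟩ := exists_inJohnPosition_comp hinj
  exact ⟨mulAddMulConj 1 p ∘L U,
    (LinearMap.surjective_of_injective (f := (mulAddMulConj 1 p).toLinearMap)
      (Injective.of_comp (f := B) hinj)).comp U.surjective, _,
    norm_apply_eq_of_inJohnPosition (S := U.trans S) hF hU hc fun z ↦ hpc (U z)⟩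

end PlaneTheorem

section Quotient

theorem exists_quotient_mk_eq_norm_eq {M : Type*} [SeminormedAddCommGroup M] [ProperSpace M]
    {S : AddSubgroup M} (hS : IsClosed (S : Set M)) (q : M ⧸ S) :
    ∃ x : M, (x : M ⧸ S) = q ∧ ‖x‖ = ‖q‖ := by
  obtain ⟨x, rfl⟩ := QuotientAddGroup.mk_surjective q
  obtain ⟨y, hy, hxy⟩ := hS.exists_infDist_eq_dist ⟨0, S.zero_mem⟩ x
  refine ⟨x - y, QuotientAddGroup.eq.2 (by simpa using hy), ?_⟩
  rw [QuotientAddGroup.norm_mk, hxy, dist_eq_norm]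

variable {X F Y : Type*} [NormedAddCommGroup X] [NormedSpace ℝ X] [NormedAddCommGroup F]
  [NormedSpace ℝ F] [NormedAddCommGroup Y] [NormedSpace ℝ Y] {q : X →L[ℝ] F}

theorem norm_comp_of_exists_norm_eq (hq : ∀ x, ‖q x‖ ≤ ‖x‖)
    (hlift : ∀ y, ∃ x, q x = y ∧ ‖x‖ = ‖y‖) (L : F →L[ℝ] Y) : ‖L ∘L q‖ = ‖L‖ := by
  refine le_antisymm (ContinuousLinearMap.opNorm_le_bound _ (norm_nonneg _) fun x ↦ ?_)
    (ContinuousLinearMap.opNorm_le_bound _ (norm_nonneg _) fun y ↦ ?_)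
  · exact L.le_opNorm_of_le (hq x)
  · obtain ⟨x, rfl, hx⟩ := hlift y
    exact hx ▸ (L ∘L q).le_opNorm x

theorem image_normAttainmentSet_comp (hq : ∀ x, ‖q x‖ ≤ ‖x‖)
    (hlift : ∀ y, ∃ x, q x = y ∧ ‖x‖ = ‖y‖) {L : F →L[ℝ] Y} (hL : L ≠ 0) :
    q '' normAttainmentSet (L ∘L q) = normAttainmentSet L := by
  have hnorm := norm_comp_of_exists_norm_eq hq hlift L
  ext y
  constructor
  · rintro ⟨x, ⟨hx, hLx⟩, rfl⟩
    rw [hnorm] at hLx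
    refine ⟨le_antisymm (hx ▸ hq x) ?_, hLx⟩
    exact le_of_mul_le_mul_left ((mul_one _).trans_le (hLx.symm.trans_le (L.le_opNorm _)))
      (norm_pos_iff.2 hL)
  · rintro ⟨hy, hLy⟩
    obtain ⟨x, rfl, hx⟩ := hlift y
    exact ⟨x, ⟨hx.trans hy, hLy.trans hnorm.symm⟩, rfl⟩

end Quotient

section FiniteDimensional

variable {X : Type*} [NormedAddCommGroup X] [NormedSpace ℝ X] [FiniteDimensional ℝ X]

theorem exists_norm_comp_eq_norm_mul_of_rank_le_two
    (h : ∀ T : X →L[ℝ] X, (T : X →ₗ[ℝ] X).rank ≤ 2 → IsConnectedUpToSign (normAttainmentSet T))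
    {B : ℂ →L[ℝ] X} (hB : Injective B) :
    ∃ V : ℂ →L[ℝ] ℂ, Surjective V ∧ ∃ k : ℝ, ∀ z, ‖B (V z)‖ = ‖z‖ * k := by
  obtain ⟨A, hA⟩ := B.toLinearMap.exists_leftInverse_of_injective (LinearMap.ker_eq_bot.2 hB)
  have hsurj : Surjective A := fun z ↦ ⟨B z, LinearMap.congr_fun hA z⟩
  have hclosed : IsClosed (A.ker : Set X) := A.ker.closed_of_finiteDimensional
  have hproper : ProperSpace X := FiniteDimensional.proper ℝ X
  let S := (A.quotKerEquivOfSurjective hsurj).symm.toContinuousLinearEquiv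
  refine exists_norm_comp_eq_norm_mul (S := S) (fun L hL ↦ ?_) hB
  rw [← image_normAttainmentSet_comp (q := A.ker.mkQL) (Submodule.Quotient.norm_mk_le _)
    (exists_quotient_mk_eq_norm_eq hclosed) hL]
  refine (h _ ?_).image_of_odd (map_continuous _) fun x ↦ map_neg _ x
  calc LinearMap.rank (L ∘L A.ker.mkQL : X →ₗ[ℝ] X) ≤ L.toLinearMap.rank :=
        LinearMap.rank_comp_le_left _ _
    _ ≤ Module.rank ℝ (X ⧸ A.ker) := LinearMap.rank_le_domain _
    _ = 2 := by
      rw [← Module.finrank_eq_rank, ← S.toLinearEquiv.finrank_eq, finrank_real_complex]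
      norm_num

theorem parallelogram_law_of_rank_le_two
    (h : ∀ T : X →L[ℝ] X, (T : X →ₗ[ℝ] X).rank ≤ 2 → IsConnectedUpToSign (normAttainmentSet T))
    (x y : X) :
    ‖x + y‖ * ‖x + y‖ + ‖x - y‖ * ‖x - y‖ = 2 * (‖x‖ * ‖x‖ + ‖y‖ * ‖y‖) := by
  by_cases hxy : LinearIndependent ℝ ![x, y]
  · let B : ℂ →L[ℝ] X := reCLM.smulRight x + imCLM.smulRight y
    have hB : Injective B := (injective_iff_map_eq_zero B).2 fun z hz ↦
      Complex.ext_iff.2 (LinearIndependent.pair_iff.1 hxy z.re z.im hz)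
    obtain ⟨V, hV, k, hk⟩ := exists_norm_comp_eq_norm_mul_of_rank_le_two h hB
    obtain ⟨a, ha⟩ := hV 1
    obtain ⟨b, hb⟩ := hV I
    have hx : x = B (V a) := by simp [ha, B]
    have hy : y = B (V b) := by simp [hb, B]
    rw [hx, hy, ← map_add, ← map_add, ← map_sub, ← map_sub, hk, hk, hk, hk]
    linear_combination k ^ 2 * parallelogram_law_with_norm ℝ a b
  · rcases eq_or_ne x 0 with rfl | hx
    · simp [two_mul]
    · obtain ⟨a, rfl⟩ : ∃ a : ℝ, a • x = y := by
        simpa [LinearIndependent.pair_iff' hx] using hxy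
      have hadd : x + a • x = (1 + a) • x := by rw [add_smul, one_smul]
      have hsub : x - a • x = (1 - a) • x := by rw [sub_smul, one_smul]
      simp only [hadd, hsub, norm_smul, Real.norm_eq_abs]
      linear_combination ‖x‖ ^ 2 * (sq_abs (1 + a) + sq_abs (1 - a) - 2 * sq_abs a)

end FiniteDimensional

theorem euclidean_of_symmetric_connected_norm_attainment_general
    {X : Type*} [NormedAddCommGroup X] [NormedSpace ℝ X] [FiniteDimensional ℝ X]
    (h : ∀ T : X →L[ℝ] X, (T : X →ₗ[ℝ] X).rank ≤ 2 →
      IsConnectedUpToSign (normAttainmentSet T)) :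
    Nonempty (InnerProductSpace ℝ X) :=
  ⟨InnerProductSpace.ofNorm ℝ (parallelogram_law_of_rank_le_two h)⟩

theorem euclidean_of_symmetric_connected_norm_attainment
    {X : Type*} [NormedAddCommGroup X] [NormedSpace ℝ X] [FiniteDimensional ℝ X]
    (h : ∀ T : X →L[ℝ] X, ∃ D : Set X, IsConnected D ∧ D ⊆ {x : X | ‖x‖ = 1} ∧
      {x : X | ‖x‖ = 1 ∧ ‖T x‖ = ‖T‖} = D ∪ (-D)) :
    Nonempty (InnerProductSpace ℝ X) :=
  euclidean_of_symmetric_connected_norm_attainment_general fun T _ ↦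
    let ⟨D, hD, _, hT⟩ := h T; ⟨D, hD, hT⟩
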